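/- The set M⁻ of pairs (A,B) of 2×2 complex matrices with B symmetric and det [[A, conj(B)],[B, conj(A)]] < 0 is path-connected. -/

import Mathlib

open Matrix ComplexOrder

/-- The set of parameters along a complex line at which the determinant does not vanish
is path-connected; consequently two matrices with nonzero determinant are joined. -/
lemma joinedIn_det_line (S : Set (Matrix (Fin 2) (Fin 2) ℂ)) (U V : Matrix (Fin 2) (Fin 2) ℂ)
    (hU : U.det ≠ 0) (hV : V.det ≠ 0)
    (hS : ∀ t : ℂ, (U + t • (V - U)).det ≠ 0 → U + t • (V - U) ∈ S) : JoinedIn S U V := by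
  classical
  have hcount : ({t : ℂ | (U + t • (V - U)).det = 0}).Countable := by
    apply Set.Finite.countable
    let p : Polynomial ℂ :=
      Polynomial.C (U 0 0 * U 1 1 - U 0 1 * U 1 0) +
      Polynomial.C (U 0 0 * (V 1 1 - U 1 1) + U 1 1 * (V 0 0 - U 0 0)
        - U 0 1 * (V 1 0 - U 1 0) - U 1 0 * (V 0 1 - U 0 1)) * Polynomial.X +
      Polynomial.C ((V 0 0 - U 0 0) * (V 1 1 - U 1 1)
        - (V 0 1 - U 0 1) * (V 1 0 - U 1 0)) * Polynomial.X ^ 2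
    have hp : ∀ t, p.eval t = (U + t • (V - U)).det := by
      intro t
      simp [p, Matrix.det_fin_two]
      ring
    have hp0 : p ≠ 0 := by
      intro h
      have := hp 0
      rw [h] at this
      simp at this
      exact hU this.symm
    refine (p.roots.toFinset.finite_toSet).subset ?_
    intro t ht
    simp only [Finset.mem_coe, Multiset.mem_toFinset, Polynomial.mem_roots hp0,
      Polynomial.IsRoot.def, hp]
    exact ht
  have hpc := hcount.isPathConnected_compl_of_one_lt_rank (E := ℂ)
    (by rw [Complex.rank_real_complex]; norm_num)
  have h01 := hpc.joinedIn 0 (by simpa using hU) 1 (by simpa using hV)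
  have h2 := h01.map (f := fun t : ℂ => U + t • (V - U)) (by fun_prop)
  simp only [zero_smul, add_zero, one_smul, add_sub_cancel] at h2
  refine h2.mono ?_
  rintro _ ⟨t, ht, rfl⟩
  exact hS t ht

lemma gl_pathConnected : IsPathConnected {U : Matrix (Fin 2) (Fin 2) ℂ | U.det ≠ 0} := by
  rw [isPathConnected_iff]
  refine ⟨⟨1, by simp⟩, fun U hU V hV => joinedIn_det_line _ U V hU hV fun t ht => ht⟩

lemma sym_pathConnected :
    IsPathConnected {U : Matrix (Fin 2) (Fin 2) ℂ | Uᵀ = U ∧ U.det ≠ 0} := by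
  rw [isPathConnected_iff]
  refine ⟨⟨1, by simp⟩, fun U hU V hV => joinedIn_det_line _ U V hU.2 hV.2 fun t ht => ⟨?_, ht⟩⟩
  simp [Matrix.transpose_add, Matrix.transpose_smul, Matrix.transpose_sub, hU.1, hV.1]

lemma det_blocks_one (N M : Matrix (Fin 2) (Fin 2) ℂ) :
    (Matrix.fromBlocks N 1 1 M).det = (N * M - 1).det := by
  rw [← Matrix.det_submatrix_equiv_self (finSumFinEquiv (m := 2) (n := 2)).symm]
  have h : (Matrix.fromBlocks N 1 1 M).submatrix (finSumFinEquiv (m := 2) (n := 2)).symm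
      (finSumFinEquiv (m := 2) (n := 2)).symm =
      !![N 0 0, N 0 1, 1, 0; N 1 0, N 1 1, 0, 1; 1, 0, M 0 0, M 0 1; 0, 1, M 1 0, M 1 1] := by
    ext i j
    fin_cases i <;> fin_cases j <;> rfl
  rw [h, Matrix.det_fin_two (N * M - 1)]
  simp only [Matrix.sub_apply, Matrix.mul_apply, Fin.sum_univ_two, Matrix.one_apply_eq,
    Matrix.one_apply_ne (zero_ne_one : (0 : Fin 2) ≠ 1),
    Matrix.one_apply_ne (one_ne_zero : (1 : Fin 2) ≠ 0)]
  simp [Matrix.det_succ_row_zero, Fin.sum_univ_succ, Fin.succAbove]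
  ring

lemma map_det_conj (N : Matrix (Fin 2) (Fin 2) ℂ) :
    (N.map (starRingEnd ℂ)).det = starRingEnd ℂ N.det :=
  ((starRingEnd ℂ).map_det N).symm

lemma det_blocks_factor (N B : Matrix (Fin 2) (Fin 2) ℂ) :
    (Matrix.fromBlocks (N * B) (B.map (starRingEnd ℂ)) B
      ((N * B).map (starRingEnd ℂ))).det =
    (N * N.map (starRingEnd ℂ) - 1).det * (Complex.normSq B.det : ℂ) := by
  have h : Matrix.fromBlocks (N * B) (B.map (starRingEnd ℂ)) B ((N * B).map (starRingEnd ℂ))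
      = Matrix.fromBlocks N 1 1 (N.map (starRingEnd ℂ)) *
        Matrix.fromBlocks B 0 0 (B.map (starRingEnd ℂ)) := by
    rw [Matrix.fromBlocks_multiply]
    simp [Matrix.map_mul]
  rw [h, Matrix.det_mul, det_blocks_one, Matrix.det_fromBlocks_zero₂₁, map_det_conj,
    Complex.mul_conj]

lemma det_blocks_im (A B : Matrix (Fin 2) (Fin 2) ℂ) :
    ((Matrix.fromBlocks A (B.map (starRingEnd ℂ)) B (A.map (starRingEnd ℂ))).det).im = 0 := by
  rw [← Complex.conj_eq_iff_im, RingHom.map_det]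
  conv_rhs => rw [← Matrix.det_submatrix_equiv_self (Equiv.sumComm (Fin 2) (Fin 2))]
  congr 1
  ext i j
  rcases i with i | i <;> rcases j with j | j <;> simp

/-- Every eigenvalue `c ^ 2`, `c` real, of `N * conj N` gives a con-eigenvector of `N`. -/
lemma exists_coneigenvector (N : Matrix (Fin 2) (Fin 2) ℂ) (c : ℝ)
    (h : (N * N.map (starRingEnd ℂ) - ((c : ℂ) ^ 2) • (1 : Matrix (Fin 2) (Fin 2) ℂ)).det = 0) :
    ∃ w : Fin 2 → ℂ, w ≠ 0 ∧ N *ᵥ (fun i => starRingEnd ℂ (w i)) = (c : ℂ) • w := by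
  obtain ⟨v, hv, hNv⟩ := Matrix.exists_mulVec_eq_zero_iff.2 h
  have e0 := congrFun hNv 0
  have e1 := congrFun hNv 1
  simp [Matrix.mulVec, dotProduct, Fin.sum_univ_two, Matrix.mul_apply, Matrix.sub_apply] at e0 e1
  let w : Fin 2 → ℂ := fun i =>
    N i 0 * starRingEnd ℂ (v 0) + N i 1 * starRingEnd ℂ (v 1) + (c : ℂ) * v i
  by_cases hw : w = 0
  · refine ⟨fun i => Complex.I * v i, ?_, ?_⟩
    · intro h0
      apply hv
      ext i
      have := congrFun h0 i
      simpa using this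
    · have f0 := congrFun hw 0
      have f1 := congrFun hw 1
      simp only [w, Pi.zero_apply] at f0 f1
      ext i
      fin_cases i
      · simp [Matrix.mulVec, dotProduct, Fin.sum_univ_two]
        linear_combination (-Complex.I) * f0
      · simp [Matrix.mulVec, dotProduct, Fin.sum_univ_two]
        linear_combination (-Complex.I) * f1
  · refine ⟨w, hw, ?_⟩
    ext i
    fin_cases i
    · simp [w, Matrix.mulVec, dotProduct, Fin.sum_univ_two]
      linear_combination e0
    · simp [w, Matrix.mulVec, dotProduct, Fin.sum_univ_two]
      linear_combination e1

lemma exists_roots (t d : ℝ) (hd : 0 ≤ d) (h : 1 - t + d < 0) :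
    ∃ a b : ℝ, 1 < a ∧ 0 ≤ b ∧ b < 1 ∧ a ^ 2 + b ^ 2 = t ∧ a ^ 2 * b ^ 2 = d := by
  have hD : 0 ≤ t ^ 2 - 4 * d := by nlinarith [sq_nonneg (1 - d)]
  obtain ⟨s, hs, hs2⟩ : ∃ s : ℝ, 0 ≤ s ∧ s ^ 2 = t ^ 2 - 4 * d :=
    ⟨√(t ^ 2 - 4 * d), Real.sqrt_nonneg _, Real.sq_sqrt hD⟩
  have h1 : 1 < (t + s) / 2 := by nlinarith
  have h2 : (t - s) / 2 < 1 := by nlinarith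
  have h3 : 0 ≤ (t - s) / 2 := by
    have : 0 ≤ (t + s) / 2 * ((t - s) / 2) := by nlinarith
    exact nonneg_of_mul_nonneg_right this (by linarith)
  refine ⟨√((t + s) / 2), √((t - s) / 2), ?_, Real.sqrt_nonneg _, ?_, ?_, ?_⟩
  · rw [Real.lt_sqrt (by norm_num)]; linarith
  · rw [Real.sqrt_lt' (by norm_num)]; linarith
  · rw [Real.sq_sqrt h3, Real.sq_sqrt (by linarith)]; ring
  · rw [Real.sq_sqrt h3, Real.sq_sqrt (by linarith)]; nlinarith

/-- Normal form under consimilarity. -/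
lemma exists_normal_form (N : Matrix (Fin 2) (Fin 2) ℂ)
    (h : (N * N.map (starRingEnd ℂ) - 1).det < 0) :
    ∃ (W : Matrix (Fin 2) (Fin 2) ℂ) (a b : ℝ), W.det ≠ 0 ∧ 1 < a ∧ 0 ≤ b ∧ b < 1 ∧
      N * W.map (starRingEnd ℂ) = W * !![(a : ℂ), 0; 0, (b : ℂ)] := by
  let t : ℝ := Complex.normSq (N 0 0) + Complex.normSq (N 1 1) +
    2 * (N 0 1 * starRingEnd ℂ (N 1 0)).re
  have ht : (t : ℂ) = N 0 0 * starRingEnd ℂ (N 0 0) + N 1 1 * starRingEnd ℂ (N 1 1) +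
      (N 0 1 * starRingEnd ℂ (N 1 0) + N 1 0 * starRingEnd ℂ (N 0 1)) := by
    have h3 : N 1 0 * starRingEnd ℂ (N 0 1) = starRingEnd ℂ (N 0 1 * starRingEnd ℂ (N 1 0)) := by
      simp [mul_comm]
    rw [h3, Complex.add_conj, Complex.mul_conj, Complex.mul_conj]
    simp [t]
  let d : ℝ := Complex.normSq N.det
  have hd : (d : ℂ) = N.det * starRingEnd ℂ N.det := (Complex.mul_conj _).symm
  have hq : ∀ l : ℂ, (N * N.map (starRingEnd ℂ) - l • (1 : Matrix (Fin 2) (Fin 2) ℂ)).det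
      = l ^ 2 - t * l + d := by
    intro l
    rw [ht, hd]
    simp [Matrix.det_fin_two, Matrix.mul_apply, Fin.sum_univ_two]
    ring
  have h1 : 1 - t + d < 0 := by
    have := hq 1
    rw [one_smul] at this
    rw [this] at h
    have h' : ((1 - t + d : ℝ) : ℂ) < ((0 : ℝ) : ℂ) := by
      push_cast
      convert h using 1
      ring
    exact_mod_cast h'
  obtain ⟨a, b, ha, hb0, hb1, hab, habm⟩ := exists_roots t d (Complex.normSq_nonneg _) h1
  have htab : (t : ℂ) = (a : ℂ) ^ 2 + (b : ℂ) ^ 2 := by rw [← hab]; push_cast; ring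
  have hdab : (d : ℂ) = (a : ℂ) ^ 2 * (b : ℂ) ^ 2 := by rw [← habm]; push_cast; ring
  obtain ⟨w, hw, hNw⟩ := exists_coneigenvector N a (by rw [hq, htab, hdab]; ring)
  obtain ⟨u, hu, hNu⟩ := exists_coneigenvector N b (by rw [hq, htab, hdab]; ring)
  have w0 := congrFun hNw 0
  have w1 := congrFun hNw 1
  have u0 := congrFun hNu 0
  have u1 := congrFun hNu 1
  simp [Matrix.mulVec, dotProduct, Fin.sum_univ_two] at w0 w1 u0 u1
  refine ⟨!![w 0, u 0; w 1, u 1], a, b, ?_, ha, hb0, hb1, ?_⟩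
  · intro hdet
    obtain ⟨x, hx, hWx⟩ := Matrix.exists_mulVec_eq_zero_iff.2 hdet
    have x0 := congrFun hWx 0
    have x1 := congrFun hWx 1
    simp [Matrix.mulVec, dotProduct, Fin.sum_univ_two] at x0 x1
    have c0 := congrArg (starRingEnd ℂ) x0
    have c1 := congrArg (starRingEnd ℂ) x1
    simp at c0 c1
    have cw0 := congrArg (starRingEnd ℂ) w0
    have cw1 := congrArg (starRingEnd ℂ) w1
    have cu0 := congrArg (starRingEnd ℂ) u0
    have cu1 := congrArg (starRingEnd ℂ) u1
    simp at cw0 cw1 cu0 cu1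
    -- apply `N * conj N` to the relation `w x₀ + u x₁ = 0`
    have r0 : (a : ℂ) ^ 2 * (w 0 * x 0) + (b : ℂ) ^ 2 * (u 0 * x 1) = 0 := by
      linear_combination
        N 0 0 * (starRingEnd ℂ (N 0 0) * x0 + starRingEnd ℂ (N 0 1) * x1) +
        N 0 1 * (starRingEnd ℂ (N 1 0) * x0 + starRingEnd ℂ (N 1 1) * x1)
        - x 0 * (N 0 0 * cw0 + N 0 1 * cw1) - x 1 * (N 0 0 * cu0 + N 0 1 * cu1)
        - a * x 0 * w0 - b * x 1 * u0
    have r1 : (a : ℂ) ^ 2 * (w 1 * x 0) + (b : ℂ) ^ 2 * (u 1 * x 1) = 0 := by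
      linear_combination
        N 1 0 * (starRingEnd ℂ (N 0 0) * x0 + starRingEnd ℂ (N 0 1) * x1) +
        N 1 1 * (starRingEnd ℂ (N 1 0) * x0 + starRingEnd ℂ (N 1 1) * x1)
        - x 0 * (N 1 0 * cw0 + N 1 1 * cw1) - x 1 * (N 1 0 * cu0 + N 1 1 * cu1)
        - a * x 0 * w1 - b * x 1 * u1
    have hne : (a : ℂ) ^ 2 - (b : ℂ) ^ 2 ≠ 0 := by
      have : a ^ 2 - b ^ 2 ≠ 0 := by nlinarith
      exact_mod_cast this
    have p0 : w 0 * x 0 = 0 := by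
      apply (mul_eq_zero.1 (?_ : ((a : ℂ) ^ 2 - (b : ℂ) ^ 2) * (w 0 * x 0) = 0)).resolve_left hne
      linear_combination r0 - (b : ℂ) ^ 2 * x0
    have p1 : w 1 * x 0 = 0 := by
      apply (mul_eq_zero.1 (?_ : ((a : ℂ) ^ 2 - (b : ℂ) ^ 2) * (w 1 * x 0) = 0)).resolve_left hne
      linear_combination r1 - (b : ℂ) ^ 2 * x1
    have hx0 : x 0 = 0 := by
      by_contra hx0
      apply hw
      ext i
      fin_cases i
      · exact (mul_eq_zero.1 p0).resolve_right hx0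
      · exact (mul_eq_zero.1 p1).resolve_right hx0
    have hx1 : x 1 = 0 := by
      by_contra hx1
      apply hu
      rw [hx0] at x0 x1
      simp only [mul_zero, zero_add] at x0 x1
      ext i
      fin_cases i
      · exact (mul_eq_zero.1 x0).resolve_right hx1
      · exact (mul_eq_zero.1 x1).resolve_right hx1
    apply hx
    ext i
    fin_cases i
    · exact hx0
    · exact hx1
  · ext i j
    fin_cases i <;> fin_cases j <;>
      simp [Matrix.mul_apply, Fin.sum_univ_two]
    · linear_combination w0
    · linear_combination u0
    · linear_combination w1
    · linear_combination u1

lemma normal_form_det (N W : Matrix (Fin 2) (Fin 2) ℂ) (a b : ℝ) (hW : W.det ≠ 0)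
    (ha : 1 < a) (hb0 : 0 ≤ b) (hb1 : b < 1)
    (h : N * W.map (starRingEnd ℂ) = W * !![(a : ℂ), 0; 0, (b : ℂ)]) :
    (N * N.map (starRingEnd ℂ) - 1).det < 0 := by
  have hc : N.map (starRingEnd ℂ) * W = W.map (starRingEnd ℂ) * !![(a : ℂ), 0; 0, (b : ℂ)] := by
    have := congrArg (fun X : Matrix (Fin 2) (Fin 2) ℂ => X.map (starRingEnd ℂ)) h
    simp only [Matrix.map_mul] at this
    convert this using 2
    · ext i j; simp
    · ext i j; fin_cases i <;> fin_cases j <;> simp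
  have h2 : (N * N.map (starRingEnd ℂ) - 1) * W =
      W * !![(a : ℂ) ^ 2 - 1, 0; 0, (b : ℂ) ^ 2 - 1] := by
    rw [Matrix.sub_mul, Matrix.mul_assoc, hc, ← Matrix.mul_assoc, h, Matrix.mul_assoc,
      Matrix.one_mul]
    ext i j
    fin_cases i <;> fin_cases j <;> simp [Matrix.mul_apply, Fin.sum_univ_two] <;> ring
  have h3 := congrArg Matrix.det h2
  rw [Matrix.det_mul, Matrix.det_mul, mul_comm] at h3
  have h4 := mul_left_cancel₀ hW h3
  rw [h4]
  have h5 : (a ^ 2 - 1) * (b ^ 2 - 1) < 0 :=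
    mul_neg_of_pos_of_neg (by nlinarith) (by nlinarith)
  have h6 : (((a ^ 2 - 1) * (b ^ 2 - 1) : ℝ) : ℂ) < ((0 : ℝ) : ℂ) := by exact_mod_cast h5
  simpa [Matrix.det_fin_two] using h6

/-- The part of `M⁻` with `B` invertible. -/
lemma generic_pathConnected :
    IsPathConnected
      {p : Matrix (Fin 2) (Fin 2) ℂ × Matrix (Fin 2) (Fin 2) ℂ |
        (p.2ᵀ = p.2 ∧ p.2.det ≠ 0) ∧
        (Matrix.fromBlocks p.1 (p.2.map (starRingEnd ℂ)) p.2
              (p.1.map (starRingEnd ℂ))).det < 0} := by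
  let P : Set (Matrix (Fin 2) (Fin 2) ℂ × (ℝ × ℝ) × Matrix (Fin 2) (Fin 2) ℂ) :=
    {U | U.det ≠ 0} ×ˢ ((Set.Ioi (1 : ℝ) ×ˢ Set.Ico (0 : ℝ) 1) ×ˢ {U | Uᵀ = U ∧ U.det ≠ 0})
  have hP : IsPathConnected P :=
    gl_pathConnected.prod ((((convex_Ioi (1 : ℝ)).isPathConnected ⟨2, by simp⟩).prod
      ((convex_Ico (0 : ℝ) 1).isPathConnected ⟨0, by simp⟩)).prod sym_pathConnected)
  let g : Matrix (Fin 2) (Fin 2) ℂ × (ℝ × ℝ) × Matrix (Fin 2) (Fin 2) ℂ →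
      Matrix (Fin 2) (Fin 2) ℂ := fun q =>
    q.1 * !![(q.2.1.1 : ℂ), 0; 0, (q.2.1.2 : ℂ)] *
      ((starRingEnd ℂ q.1.det)⁻¹ • (q.1.map (starRingEnd ℂ)).adjugate)
  have hg : ∀ q ∈ P, g q * q.1.map (starRingEnd ℂ) =
      q.1 * !![(q.2.1.1 : ℂ), 0; 0, (q.2.1.2 : ℂ)] := by
    rintro q ⟨hq, -⟩
    have hq' : starRingEnd ℂ q.1.det ≠ 0 := by simpa using hq
    simp only [g]
    rw [Matrix.mul_assoc, Matrix.smul_mul, Matrix.adjugate_mul, map_det_conj, smul_smul,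
      inv_mul_cancel₀ hq', one_smul, Matrix.mul_one]
  have hgc : ContinuousOn g P := by
    have hdiag : Continuous fun q : Matrix (Fin 2) (Fin 2) ℂ × (ℝ × ℝ) ×
        Matrix (Fin 2) (Fin 2) ℂ => !![(q.2.1.1 : ℂ), 0; 0, (q.2.1.2 : ℂ)] := by
      refine continuous_matrix fun i j => ?_
      fin_cases i <;> fin_cases j <;> simp <;> fun_prop
    have hconj : Continuous fun q : Matrix (Fin 2) (Fin 2) ℂ × (ℝ × ℝ) ×
        Matrix (Fin 2) (Fin 2) ℂ => q.1.map (starRingEnd ℂ) :=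
      continuous_fst.matrix_map Complex.continuous_conj
    have hdet : Continuous fun q : Matrix (Fin 2) (Fin 2) ℂ × (ℝ × ℝ) ×
        Matrix (Fin 2) (Fin 2) ℂ => starRingEnd ℂ q.1.det :=
      Complex.continuous_conj.comp continuous_fst.matrix_det
    refine ((continuous_fst.matrix_mul hdiag).continuousOn).mul
      ((hdet.continuousOn.inv₀ ?_).smul hconj.matrix_adjugate.continuousOn)
    rintro q ⟨hq, -⟩
    simpa using hq
  have himg := hP.image' (f := fun q => (g q * q.2.2, q.2.2))
    ((hgc.mul (by fun_prop)).prodMk (by fun_prop))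
  convert himg using 1
  ext ⟨A, B⟩
  constructor
  · rintro ⟨⟨hB, hBd⟩, hneg⟩
    simp only at hB hBd hneg
    have hA : A = (A * B⁻¹) * B := by
      rw [Matrix.mul_assoc, Matrix.nonsing_inv_mul _ (isUnit_iff_ne_zero.2 hBd), Matrix.mul_one]
    set N := A * B⁻¹ with hN
    rw [hA, det_blocks_factor] at hneg
    have hpos : 0 < (Complex.normSq B.det : ℂ) := by
      exact_mod_cast Complex.normSq_pos.2 hBd
    have hneg' : (N * N.map (starRingEnd ℂ) - 1).det < 0 := by
      by_contra hcon
      rw [Complex.lt_def] at hneg hcon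
      simp only [Complex.re_mul_ofReal, Complex.im_mul_ofReal, Complex.zero_re,
        Complex.zero_im] at hneg hcon
      have hpos' := Complex.normSq_pos.2 hBd
      apply hcon
      refine ⟨?_, ?_⟩
      · by_contra hh
        nlinarith [mul_nonneg (not_lt.1 hh) hpos'.le]
      · exact (mul_eq_zero.1 hneg.2).resolve_right hpos'.ne'
    obtain ⟨W, a, b, hW, ha, hb0, hb1, hNW⟩ := exists_normal_form N hneg'
    have hq : (W, (a, b), B) ∈ P := ⟨hW, ⟨ha, hb0, hb1⟩, hB, hBd⟩
    refine ⟨(W, (a, b), B), hq, ?_⟩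
    have h1 := hg _ hq
    simp only at h1
    rw [← hNW] at h1
    have hWc : IsUnit (W.map (starRingEnd ℂ)).det := by
      rw [map_det_conj]; simpa using hW
    have h2 := congrArg (fun X => X * (W.map (starRingEnd ℂ))⁻¹) h1
    simp only [Matrix.mul_assoc, Matrix.mul_nonsing_inv _ hWc, Matrix.mul_one] at h2
    simp only [h2, Prod.mk.injEq, and_true]
    exact hA.symm
  · rintro ⟨⟨W, ⟨a, b⟩, B'⟩, hq, heq⟩
    have h1 := hg _ hq
    obtain ⟨hW, ⟨ha, hb0, hb1⟩, hB, hBd⟩ := hq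
    simp only [Prod.mk.injEq] at heq
    obtain ⟨rfl, rfl⟩ := heq
    refine ⟨⟨hB, hBd⟩, ?_⟩
    simp only
    rw [det_blocks_factor]
    have h2 := normal_form_det _ W a b hW ha hb0 hb1 h1
    have hpos : 0 < (Complex.normSq B'.det : ℂ) := by
      exact_mod_cast Complex.normSq_pos.2 hBd
    exact mul_neg_of_neg_of_pos h2 hpos

/-- The set `M⁻` of pairs `(A,B)` of 2×2 complex matrices with `B` symmetric and
`det [[A, conj B],[B, conj A]] < 0` is path-connected. -/
theorem M_minus_pathConnected :
    IsPathConnected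
      {p : Matrix (Fin 2) (Fin 2) ℂ × Matrix (Fin 2) (Fin 2) ℂ |
        p.2ᵀ = p.2 ∧
        (Matrix.fromBlocks p.1 (p.2.map (starRingEnd ℂ)) p.2
              (p.1.map (starRingEnd ℂ))).det < 0} := by
  obtain ⟨x, hx, hgen⟩ := generic_pathConnected
  refine ⟨x, ⟨hx.1.1, hx.2⟩, ?_⟩
  rintro ⟨A, B⟩ ⟨hB, hneg⟩
  simp only at hB hneg
  let γ : ℝ → Matrix (Fin 2) (Fin 2) ℂ × Matrix (Fin 2) (Fin 2) ℂ :=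
    fun t => (A, B + (t : ℂ) • (1 : Matrix (Fin 2) (Fin 2) ℂ))
  have hγ : Continuous γ := by fun_prop
  let F : ℝ → ℂ := fun t => (Matrix.fromBlocks (γ t).1 ((γ t).2.map (starRingEnd ℂ)) (γ t).2
              ((γ t).1.map (starRingEnd ℂ))).det
  have hF : Continuous fun t => (F t).re := by
    apply Complex.continuous_re.comp
    apply Continuous.matrix_det
    apply Continuous.matrix_fromBlocks
    · fun_prop
    · exact (continuous_snd.comp hγ).matrix_map Complex.continuous_conj
    · fun_prop
    · exact (continuous_fst.comp hγ).matrix_map Complex.continuous_conj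
  have hF0 : (F 0).re < 0 := by
    have : F 0 < 0 := by simpa [F, γ] using hneg
    exact (Complex.lt_def.1 this).1
  obtain ⟨δ, hδ, hball⟩ := Metric.isOpen_iff.1 (isOpen_Iio.preimage hF : IsOpen _) 0 hF0
  -- a small parameter with `B + t` invertible
  have hex : ∃ t ∈ Metric.ball (0 : ℝ) δ, (γ t).2.det ≠ 0 := by
    by_contra hcon
    push Not at hcon
    have e1 := hcon (δ / 2) (by simp [abs_of_pos hδ]; linarith)
    have e2 := hcon (δ / 3) (by simp [abs_of_pos hδ]; linarith)
    have e3 := hcon (δ / 4) (by simp [abs_of_pos hδ]; linarith)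
    simp [γ, Matrix.det_fin_two] at e1 e2 e3
    have hδ' : (δ : ℂ) ≠ 0 := by exact_mod_cast hδ.ne'
    apply hδ'
    have : (δ : ℂ) ^ 2 = 0 := by
      linear_combination 24 * e1 - 72 * e2 + 48 * e3
    exact pow_eq_zero_iff (two_ne_zero) |>.1 this
  obtain ⟨t, ht, hdet⟩ := hex
  have hmem : ∀ s ∈ Metric.ball (0 : ℝ) δ, (γ s).2ᵀ = (γ s).2 ∧ F s < 0 := by
    intro s hs
    refine ⟨by simp [γ, hB], ?_⟩
    exact Complex.lt_def.2 ⟨hball hs, det_blocks_im _ _⟩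
  have hj : JoinedIn (Metric.ball (0 : ℝ) δ) t 0 :=
    ((convex_ball (0 : ℝ) δ).isPathConnected ⟨0, by simpa using hδ⟩).joinedIn _ ht _
      (by simpa using hδ)
  have hj2 := hj.map hγ
  have hγ0 : γ 0 = (A, B) := by simp [γ]
  rw [hγ0] at hj2
  refine JoinedIn.trans ?_ (hj2.mono ?_)
  · exact (hgen (y := γ t) ⟨⟨(hmem t ht).1, hdet⟩, (hmem t ht).2⟩).mono
      fun p hp => ⟨hp.1.1, hp.2⟩
  · rintro _ ⟨s, hs, rfl⟩
    exact hmem s hs
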